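/- For τ = {nop, set, swap, free}: if the union U^{σ1}_φ has the τ-ESSP, then U^{σ1}_φ has the τ-SSP. -/

import Mathlib

/-!
Two families of regions separate all states of every chain of `U^{σ1}_φ`.

* For an event `e`, mapping `e` to `swap` and every other event to `nop` gives a region whose
  support is the parity of the number of `e`-edges passed so far (`sep_of_count`). It separates
  two states with exactly one `e`-edge between them. This settles states in a common
  segment with pairwise distinct events (`sep_of_nodup`), and states on different sides of an
  edge whose event occurs only once in the chain (`sep_of_unique`).
* A one-way edge labelled `e` allows a cut: `e` is mapped to `set`, every other event to `nop`,
  and the support is 1 everywhere except on the source side of that edge in its own chain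
  (`sep_cut_fwd`, `sep_cut_bwd`). All other `e`-edges of that chain lie on the target side.

In `sep_of_lt` every chain is divided, at uniquely labelled edges or at one-way edges, into
segments with pairwise distinct events; in the chains `T_{i,r}` this uses that the variables of
a clause are pairwise distinct.
-/

namespace PetriNets

/-- The eight boolean interactions. -/
inductive Interaction : Type
  | nop | inp | out | set | res | swap | used | free
  deriving DecidableEq

/-- The partial function on `{0,1}` (encoded as `Bool`) denoted by an interaction. -/
def Interaction.apply : Interaction → Bool → Option Bool
  | .nop, x => some x
  | .inp, x => if x then some false else none
  | .out, x => if x then none else some true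
  | .set, _ => some true
  | .res, _ => some false
  | .swap, x => some (!x)
  | .used, x => if x then some true else none
  | .free, x => if x then none else some false

/-- A transition system with states `S`, events `E`, a partial transition
function and an initial state. -/
structure TS (S E : Type) where
  delta : S → E → Option S
  init : S

/-- A `τ`-region of a transition system. -/
structure Region (τ : Set Interaction) {S E : Type} (A : TS S E) where
  sup : S → Bool
  sig : E → Interaction
  sig_mem : ∀ e : E, sig e ∈ τ
  consistent : ∀ (s : S) (e : E) (s' : S), A.delta s e = some s' →
    (sig e).apply (sup s) = some (sup s')

/-- The state separation property. -/
def SSP (τ : Set Interaction) {S E : Type} (A : TS S E) : Prop :=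
  ∀ s s' : S, s ≠ s' → ∃ R : Region τ A, R.sup s ≠ R.sup s'

/-- The event state separation property. -/
def ESSP (τ : Set Interaction) {S E : Type} (A : TS S E) : Prop :=
  ∀ (s : S) (e : E), A.delta s e = none →
    ∃ R : Region τ A, (R.sig e).apply (R.sup s) = none

/-- `τ`-feasibility: both the `τ`-SSP and the `τ`-ESSP. -/
def Feasible (τ : Set Interaction) {S E : Type} (A : TS S E) : Prop :=
  SSP τ A ∧ ESSP τ A

/-- A union of transition systems with pairwise disjoint states (disjointness is
enforced by the sigma type of states) over a common event alphabet. -/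
def Union (ι : Type) (S : ι → Type) (E : Type) : Type := (i : ι) → TS (S i) E

/-- A `τ`-region of a union: its restriction to every component is a region. -/
structure URegion (τ : Set Interaction) {ι : Type} {S : ι → Type} {E : Type}
    (U : Union ι S E) where
  sup : (Σ i : ι, S i) → Bool
  sig : E → Interaction
  sig_mem : ∀ e : E, sig e ∈ τ
  consistent : ∀ (i : ι) (s : S i) (e : E) (s' : S i), (U i).delta s e = some s' →
    (sig e).apply (sup ⟨i, s⟩) = some (sup ⟨i, s'⟩)

/-- SSP for unions: distinct states of a common component are separable. -/
def USSP (τ : Set Interaction) {ι : Type} {S : ι → Type} {E : Type}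
    (U : Union ι S E) : Prop :=
  ∀ (i : ι) (s s' : S i), s ≠ s' → ∃ R : URegion τ U, R.sup ⟨i, s⟩ ≠ R.sup ⟨i, s'⟩

/-- ESSP for unions: every event is inhibitable at every state where it does not occur. -/
def UESSP (τ : Set Interaction) {ι : Type} {S : ι → Type} {E : Type}
    (U : Union ι S E) : Prop :=
  ∀ (e : E) (i : ι) (s : S i), (U i).delta s e = none →
    ∃ R : URegion τ U, (R.sig e).apply (R.sup ⟨i, s⟩) = none

/-- The type of nets `{nop, set, swap, free}`, i.e. the single member of `σ1`. -/
def tau1 : Set Interaction :=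
  {Interaction.nop, Interaction.set, Interaction.swap, Interaction.free}

/-- Membership in `σ2 = { {nop, set, swap, used} ∪ ω : ω ⊆ {res, free} }`. -/
def sigma2mem (τ : Set Interaction) : Prop :=
  ∃ ω : Set Interaction, ω ⊆ {Interaction.res, Interaction.free} ∧
    τ = ({Interaction.nop, Interaction.set, Interaction.swap, Interaction.used} :
      Set Interaction) ∪ ω

/-- Direction of an edge of a chain-shaped transition system. -/
inductive Dir : Type
  | fwd | bwd | both
  deriving DecidableEq

def Dir.allowsFwd : Dir → Bool
  | .fwd => true
  | .both => true
  | .bwd => false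

def Dir.allowsBwd : Dir → Bool
  | .bwd => true
  | .both => true
  | .fwd => false

def echk {E : Type} [DecidableEq E] (o : Option (E × Dir)) (e : E) (fwd : Bool) : Bool :=
  match o with
  | none => false
  | some (e', d) => decide (e' = e) && (if fwd then d.allowsFwd else d.allowsBwd)

/-- Transition function of a chain with edge specification `spec`:
`spec[t] = (e, d)` means an edge between states `t` and `t + 1` labelled `e`
with direction `d` (forward, backward or both). -/
def chainDelta {E : Type} [DecidableEq E] (spec : List (E × Dir)) (s : ℕ) (e : E) :
    Option ℕ :=
  if echk spec[s]? e true = true then some (s + 1)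
  else if s ≠ 0 ∧ echk spec[s - 1]? e false = true then some (s - 1)
  else none

/-- A chain-shaped transition system with `n + 1` states whose initial state is
the last state of the chain. -/
def chainTS {E : Type} [DecidableEq E] (n : ℕ) (spec : List (E × Dir)) :
    TS (Fin (n + 1)) E where
  init := Fin.last n
  delta := fun s e => (chainDelta spec s.val e).bind fun r =>
    if h : r < n + 1 then some ⟨r, h⟩ else none

/-- Index set of the gadget transition systems of `U^σ_φ`. -/
inductive GIdx (m : ℕ) : Type
  | H : Fin (4 * m) → GIdx m
  | F0 : GIdx m
  | F1 : GIdx m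
  | F2 : GIdx m
  | G : Fin m → GIdx m
  | D : Fin (3 * m) → GIdx m
  | T0 : Fin m → GIdx m
  | T1 : Fin m → GIdx m
  | T2 : Fin m → GIdx m
  | T3 : Fin m → GIdx m
  deriving DecidableEq, Fintype

/-- Events of the gadgets of `U^σ_φ`; `u g` is the unique fresh event of gadget `g`
and `x vv` is the event of the variable `vv` of `φ`. -/
inductive GEvent (V : Type) (m : ℕ) : Type
  | k : GEvent V m
  | mev : GEvent V m
  | z : GEvent V m
  | q : Fin 4 → GEvent V m
  | v : Fin (4 * m) → GEvent V m
  | w : Fin m → GEvent V m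
  | y : Fin m → GEvent V m
  | p : Fin (3 * m) → GEvent V m
  | a : Fin (3 * m) → GEvent V m
  | x : V → GEvent V m
  | u : GIdx m → GEvent V m
  deriving DecidableEq

/-- State spaces of the gadget transition systems. -/
def GS (m : ℕ) : GIdx m → Type
  | .H _ => Fin 6
  | .F0 => Fin 9
  | .F1 => Fin 6
  | .F2 => Fin 10
  | .G _ => Fin 9
  | .D _ => Fin 9
  | .T0 _ => Fin 18
  | .T1 _ => Fin 5
  | .T2 _ => Fin 5
  | .T3 _ => Fin 5

def fmul4 {m : ℕ} (i : Fin m) (o : Fin 4) : Fin (4 * m) :=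
  ⟨4 * i.val + o.val, by have h1 := i.isLt; have h2 := o.isLt; omega⟩

def fmul3 {m : ℕ} (i : Fin m) (o : Fin 3) : Fin (3 * m) :=
  ⟨3 * i.val + o.val, by have h1 := i.isLt; have h2 := o.isLt; omega⟩

/-- The union `U^σ_φ` for a cubic monotone 3-CNF `φ` given by its clauses
`X : Fin m → Fin 3 → V`.  For `b = false` this is `U^{σ1}_φ`, for `b = true`
it is `U^{σ2}_φ` (in which the events `v_{4i}` and `w_i` of `T_{i,0}` are exchanged). -/
def gadget {V : Type} [DecidableEq V] (m : ℕ) (X : Fin m → Fin 3 → V) (b : Bool) :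
    Union (GIdx m) (GS m) (GEvent V m) := fun idx =>
  match idx with
  | .H j => chainTS 5
      [(.k, .both), (.mev, .both), (.v j, .both), (.k, .both), (.u (.H j), .both)]
  | .F0 => chainTS 8
      [(.k, .both), (.mev, .both), (.q 0, .both), (.k, .both), (.mev, .both),
       (.q 1, .both), (.k, .both), (.u .F0, .both)]
  | .F1 => chainTS 5
      [(.k, .both), (.q 2, .both), (.q 3, .both), (.k, .both), (.u .F1, .both)]
  | .F2 => chainTS 9
      [(.k, .both), (.q 2, .both), (.q 0, .both), (.z, .both), (.q 1, .both),
       (.z, .both), (.q 3, .both), (.k, .both), (.u .F2, .both)]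
  | .G j => chainTS 8
      [(.k, .both), (.y j, .both), (.z, .fwd), (.z, .both), (.y j, .both),
       (.w j, .both), (.k, .both), (.u (.G j), .both)]
  | .D l => chainTS 8
      [(.k, .both), (.p l, .both), (.z, .fwd), (.z, .both), (.p l, .both),
       (.a l, .both), (.k, .both), (.u (.D l), .both)]
  | .T0 i => chainTS 17
      [(.k, .both),
       ((if b then .w i else .v (fmul4 i 0)), .both),
       (.a (fmul3 i 0), .both),
       (.x (X i 0), .both),
       (.x (X i 0), .bwd),
       (.a (fmul3 i 0), .both),
       (.a (fmul3 i 1), .both),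
       (.x (X i 1), .both),
       (.x (X i 1), .bwd),
       (.a (fmul3 i 1), .both),
       (.a (fmul3 i 2), .both),
       (.x (X i 2), .both),
       (.x (X i 2), .bwd),
       (.a (fmul3 i 2), .both),
       ((if b then .v (fmul4 i 0) else .w i), .both),
       (.k, .both),
       (.u (.T0 i), .both)]
  | .T1 i => chainTS 4
      [(.x (X i 0), .both), (.v (fmul4 i 1), .both), (.x (X i 1), .both),
       (.u (.T1 i), .both)]
  | .T2 i => chainTS 4
      [(.x (X i 0), .both), (.v (fmul4 i 2), .both), (.x (X i 2), .both),
       (.u (.T2 i), .both)]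
  | .T3 i => chainTS 4
      [(.x (X i 1), .both), (.v (fmul4 i 3), .both), (.x (X i 2), .both),
       (.u (.T3 i), .both)]

/-- `φ` is a cubic monotone 3-CNF: the three variables of every clause are
pairwise distinct, and every variable occurs in exactly three clauses. -/
def Cubic {V : Type} [Fintype V] [DecidableEq V] (m : ℕ) (X : Fin m → Fin 3 → V) : Prop :=
  (∀ i : Fin m, Function.Injective (X i)) ∧
  ∀ vv : V, (Finset.univ.filter (fun pr : Fin m × Fin 3 => X pr.1 pr.2 = vv)).card = 3

/-- `M` is a one-in-three model of `φ`: it contains exactly one variable of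
every clause. -/
def OneInThree {V : Type} (m : ℕ) (X : Fin m → Fin 3 → V) (M : Set V) : Prop :=
  ∀ i : Fin m, ∃! r : Fin 3, X i r ∈ M

def hidx {m : ℕ} (hm : 0 < m) : Fin (4 * m) := ⟨0, by omega⟩

/-- The state `h_{0,2}` of the gadget `H_0`. -/
def h02 {m : ℕ} (hm : 0 < m) : Σ i : GIdx m, GS m i := ⟨GIdx.H (hidx hm), (2 : Fin 6)⟩

/-! ### Chains as lists of labelled edges -/

section Helpers

variable {V : Type} {m : ℕ}

/-- The edge list of the chain with index `idx` in `U^{σ1}_φ`. -/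
def edges (X : Fin m → Fin 3 → V) : GIdx m → List (GEvent V m × Dir)
  | .H j =>
      [(.k, .both), (.mev, .both), (.v j, .both), (.k, .both), (.u (.H j), .both)]
  | .F0 =>
      [(.k, .both), (.mev, .both), (.q 0, .both), (.k, .both), (.mev, .both),
       (.q 1, .both), (.k, .both), (.u .F0, .both)]
  | .F1 =>
      [(.k, .both), (.q 2, .both), (.q 3, .both), (.k, .both), (.u .F1, .both)]
  | .F2 =>
      [(.k, .both), (.q 2, .both), (.q 0, .both), (.z, .both), (.q 1, .both),
       (.z, .both), (.q 3, .both), (.k, .both), (.u .F2, .both)]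
  | .G j =>
      [(.k, .both), (.y j, .both), (.z, .fwd), (.z, .both), (.y j, .both),
       (.w j, .both), (.k, .both), (.u (.G j), .both)]
  | .D l =>
      [(.k, .both), (.p l, .both), (.z, .fwd), (.z, .both), (.p l, .both),
       (.a l, .both), (.k, .both), (.u (.D l), .both)]
  | .T0 i =>
      [(.k, .both), (.v (fmul4 i 0), .both),
       (.a (fmul3 i 0), .both), (.x (X i 0), .both),
       (.x (X i 0), .bwd), (.a (fmul3 i 0), .both),
       (.a (fmul3 i 1), .both), (.x (X i 1), .both),
       (.x (X i 1), .bwd), (.a (fmul3 i 1), .both),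
       (.a (fmul3 i 2), .both), (.x (X i 2), .both),
       (.x (X i 2), .bwd), (.a (fmul3 i 2), .both),
       (.w i, .both), (.k, .both), (.u (.T0 i), .both)]
  | .T1 i =>
      [(.x (X i 0), .both), (.v (fmul4 i 1), .both), (.x (X i 1), .both),
       (.u (.T1 i), .both)]
  | .T2 i =>
      [(.x (X i 0), .both), (.v (fmul4 i 2), .both), (.x (X i 2), .both),
       (.u (.T2 i), .both)]
  | .T3 i =>
      [(.x (X i 1), .both), (.v (fmul4 i 3), .both), (.x (X i 2), .both),
       (.u (.T3 i), .both)]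

/-- The position of a state in its chain. -/
def pos : (idx : GIdx m) → GS m idx → ℕ
  | .H _, s => Fin.val (n := 6) s
  | .F0, s => Fin.val (n := 9) s
  | .F1, s => Fin.val (n := 6) s
  | .F2, s => Fin.val (n := 10) s
  | .G _, s => Fin.val (n := 9) s
  | .D _, s => Fin.val (n := 9) s
  | .T0 _, s => Fin.val (n := 18) s
  | .T1 _, s => Fin.val (n := 5) s
  | .T2 _, s => Fin.val (n := 5) s
  | .T3 _, s => Fin.val (n := 5) s

theorem pos_injective (idx : GIdx m) : Function.Injective (pos idx) := by
  intro s s' h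
  cases idx <;> exact Fin.ext h

theorem pos_le (X : Fin m → Fin 3 → V) (idx : GIdx m) (s : GS m idx) :
    pos idx s ≤ (edges X idx).length := by
  cases idx <;> exact Nat.le_of_lt_succ (Fin.isLt s)

theorem echk_eq_true {E : Type} [DecidableEq E] {o : Option (E × Dir)} {e : E} {b : Bool}
    (h : echk o e b = true) :
    ∃ d : Dir, o = some (e, d) ∧ (if b then d.allowsFwd else d.allowsBwd) = true := by
  unfold echk at h
  split at h
  · simp at h
  · rename_i e' d
    simp only [Bool.and_eq_true, decide_eq_true_eq] at h
    exact ⟨d, by rw [h.1], h.2⟩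

/-- Every transition of a chain traverses one of its edges in a permitted direction. -/
theorem chainTS_delta {E : Type} [DecidableEq E] {n : ℕ} {l : List (E × Dir)}
    {s s' : Fin (n + 1)} {e : E} (h : (chainTS n l).delta s e = some s') :
    (∃ d : Dir, l[s.val]? = some (e, d) ∧ d.allowsFwd = true ∧ s'.val = s.val + 1) ∨
    (∃ d : Dir, l[s'.val]? = some (e, d) ∧ d.allowsBwd = true ∧ s.val = s'.val + 1) := by
  simp only [chainTS, Option.bind_eq_some_iff] at h
  obtain ⟨r, hr, h⟩ := h
  split at h
  swap
  · simp at h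
  simp only [Option.some.injEq] at h
  subst h
  unfold chainDelta at hr
  split at hr
  · rename_i hc
    obtain ⟨d, hd, ha⟩ := echk_eq_true hc
    left
    exact ⟨d, hd, by simpa using ha, by simpa using hr.symm⟩
  · split at hr
    · rename_i hc
      obtain ⟨d, hd, ha⟩ := echk_eq_true hc.2
      simp only [Option.some.injEq] at hr
      subst hr
      right
      exact ⟨d, hd, by simpa using ha, by have := hc.1; simp only; omega⟩
    · simp at hr

theorem gadget_delta [DecidableEq V] (X : Fin m → Fin 3 → V) (idx : GIdx m)
    (s s' : GS m idx) (e : GEvent V m)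
    (h : (gadget m X false idx).delta s e = some s') :
    (∃ d : Dir, (edges X idx)[pos idx s]? = some (e, d) ∧ d.allowsFwd = true ∧
      pos idx s' = pos idx s + 1) ∨
    (∃ d : Dir, (edges X idx)[pos idx s']? = some (e, d) ∧ d.allowsBwd = true ∧
      pos idx s = pos idx s' + 1) := by
  cases idx <;> exact chainTS_delta h

/-! ### Regions described by positions -/

/-- Positions `a` and `b` of the chain `idx` are separated by a region whose support is
given as a function of chain and position. -/
def Sep (X : Fin m → Fin 3 → V) (idx : GIdx m) (a b : ℕ) : Prop :=
  ∃ (sup : GIdx m → ℕ → Bool) (sig : GEvent V m → Interaction),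
    (∀ e, sig e ∈ tau1) ∧
    (∀ i t e d, (edges X i)[t]? = some (e, d) →
      (d.allowsFwd = true → (sig e).apply (sup i t) = some (sup i (t + 1))) ∧
      (d.allowsBwd = true → (sig e).apply (sup i (t + 1)) = some (sup i t))) ∧
    sup idx a ≠ sup idx b

theorem Sep.exists_region [DecidableEq V] {X : Fin m → Fin 3 → V} {idx : GIdx m}
    {s s' : GS m idx} (h : Sep X idx (pos idx s) (pos idx s')) :
    ∃ R : URegion tau1 (gadget m X false), R.sup ⟨idx, s⟩ ≠ R.sup ⟨idx, s'⟩ := by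
  obtain ⟨sup, sig, hmem, hcons, hne⟩ := h
  refine ⟨⟨fun st => sup st.1 (pos st.1 st.2), sig, hmem, ?_⟩, hne⟩
  intro i s e s' hd
  rcases gadget_delta X i s s' e hd with ⟨d, hl, ha, hp⟩ | ⟨d, hl, ha, hp⟩
  · simp only [hp]
    exact (hcons i _ e d hl).1 ha
  · simp only [hp]
    exact (hcons i _ e d hl).2 ha

/-- The parity region of `e`: `e` is mapped to `swap`, every other event to `nop`, and the
support at a position is the parity of the number of preceding `e`-edges. -/
theorem sep_of_count [DecidableEq V] {X : Fin m → Fin 3 → V} {idx : GIdx m} {a b : ℕ}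
    (hab : a < b) (e : GEvent V m)
    (h : ((((edges X idx).map Prod.fst).take b).drop a).count e = 1) : Sep X idx a b := by
  refine ⟨fun i t => decide (Odd ((((edges X i).map Prod.fst).take t).count e)),
    fun f => if f = e then .swap else .nop, ?_, ?_, ?_⟩
  · intro f
    simp only [tau1]
    split <;> simp
  · intro i t f d hl
    have hstep : (((edges X i).map Prod.fst).take (t + 1)).count e =
        (((edges X i).map Prod.fst).take t).count e + if f = e then 1 else 0 := by
      rw [List.take_add_one, List.count_append, List.getElem?_map, hl]
      simp [List.count_singleton]
    simp only [hstep]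
    split <;> simp [Interaction.apply, Nat.odd_add_one, -Nat.not_odd_iff_even]
  · have hsum : (((edges X idx).map Prod.fst).take b).count e =
        (((edges X idx).map Prod.fst).take a).count e + 1 := by
      conv_lhs => rw [← List.take_append_drop a (((edges X idx).map Prod.fst).take b)]
      rw [List.count_append, h, List.take_take, min_eq_left hab.le]
    simp only [hsum]
    simp [Nat.odd_add_one, -Nat.not_odd_iff_even]

/-- Two positions are separated if they lie in a segment of pairwise distinct events. -/
theorem sep_of_nodup [DecidableEq V] {X : Fin m → Fin 3 → V} {idx : GIdx m} {a b : ℕ}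
    (hab : a < b) (hb : b ≤ (edges X idx).length) (lo hi : ℕ) (hlo : lo ≤ a) (hhi : b ≤ hi)
    (h : ((((edges X idx).map Prod.fst).take hi).drop lo).Nodup) : Sep X idx a b := by
  have hlen : a < (((edges X idx).map Prod.fst).take b).length := by simp; omega
  refine sep_of_count hab ((((edges X idx).map Prod.fst).take b)[a]) ?_
  refine List.count_eq_one_of_mem (h.sublist ?_) ?_
  · exact (List.drop_sublist_drop_left _ hlo).trans
      ((List.take_sublist_take_left hhi).drop lo)
  · rw [List.drop_eq_getElem_cons hlen]
    simp

/-- Two positions are separated if an edge between them carries an event that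
labels no other edge of the chain. -/
theorem sep_of_unique [DecidableEq V] {X : Fin m → Fin 3 → V} {idx : GIdx m} {a b : ℕ}
    (t : ℕ) (hat : a ≤ t) (htb : t < b) (e : GEvent V m)
    (ht : ((edges X idx).map Prod.fst)[t]? = some e)
    (h : ((edges X idx).map Prod.fst).count e = 1) : Sep X idx a b := by
  refine sep_of_count (hat.trans_lt htb) e (le_antisymm ?_ ?_)
  · exact h ▸ ((List.drop_sublist _ _).trans (List.take_sublist _ _)).count_le e
  · rw [Nat.succ_le_iff, List.count_pos_iff]
    refine List.mem_of_getElem? (i := t - a) ?_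
    rw [List.getElem?_drop, Nat.add_sub_cancel' hat, List.getElem?_take_of_lt htb, ht]

/-- The region obtained by cutting the chain `idx` at the one-way edge `t` labelled `e`,
which is the first `e`-edge of the chain: `e` is mapped to `set`, every other event to
`nop`, and the support vanishes exactly on the positions of `idx` up to `t`. -/
theorem sep_cut_fwd {X : Fin m → Fin 3 → V} {idx : GIdx m} {a b : ℕ}
    (t : ℕ) (hat : a ≤ t) (htb : t < b) (e : GEvent V m)
    (ht : (edges X idx)[t]? = some (e, .fwd))
    (h : ∀ r d, (edges X idx)[r]? = some (e, d) → t ≤ r) : Sep X idx a b := by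
  classical
  refine ⟨fun i r => if i = idx then decide (t < r) else true,
    fun f => if f = e then .set else .nop, ?_, ?_, ?_⟩
  · intro f
    simp only [tau1]
    split <;> simp
  · intro i r f d hl
    by_cases hi : i = idx
    · subst hi
      by_cases hf : f = e
      · subst hf
        have hr := h r d hl
        refine ⟨fun _ => ?_, fun hd => ?_⟩
        · simp [Interaction.apply]; omega
        · have hne : r ≠ t := by
            rintro rfl
            rw [ht] at hl
            cases hl
            cases hd
          simp [Interaction.apply]; omega
      · have hne : r ≠ t := by
          rintro rfl
          rw [ht] at hl
          cases hl
          exact hf rfl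
        simp [Interaction.apply, hf]
        omega
    · by_cases hf : f = e <;> simp [Interaction.apply, hi, hf]
  · simp; omega

/-- The mirror image of `sep_cut_fwd`: here the one-way edge points backwards and is the
last `e`-edge of the chain, and the support vanishes exactly beyond it. -/
theorem sep_cut_bwd {X : Fin m → Fin 3 → V} {idx : GIdx m} {a b : ℕ}
    (t : ℕ) (hat : a ≤ t) (htb : t < b) (e : GEvent V m)
    (ht : (edges X idx)[t]? = some (e, .bwd))
    (h : ∀ r d, (edges X idx)[r]? = some (e, d) → r ≤ t) : Sep X idx a b := by
  classical
  refine ⟨fun i r => if i = idx then decide (r ≤ t) else true,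
    fun f => if f = e then .set else .nop, ?_, ?_, ?_⟩
  · intro f
    simp only [tau1]
    split <;> simp
  · intro i r f d hl
    by_cases hi : i = idx
    · subst hi
      by_cases hf : f = e
      · subst hf
        have hr := h r d hl
        refine ⟨fun hd => ?_, fun _ => ?_⟩
        · have hne : r ≠ t := by
            rintro rfl
            rw [ht] at hl
            cases hl
            cases hd
          simp [Interaction.apply]; omega
        · simp [Interaction.apply]; omega
      · have hne : r ≠ t := by
          rintro rfl
          rw [ht] at hl
          cases hl
          exact hf rfl
        simp [Interaction.apply, hf]
        omega
    · by_cases hf : f = e <;> simp [Interaction.apply, hi, hf]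
  · simp; omega

/-! ### Separation within each chain -/

theorem fmul3_inj {i : Fin m} {r s : Fin 3} : fmul3 i r = fmul3 i s ↔ r = s := by
  simp [fmul3, Fin.ext_iff]

theorem sep_of_lt [DecidableEq V] {X : Fin m → Fin 3 → V}
    (hX : ∀ i, Function.Injective (X i)) (idx : GIdx m) {a b : ℕ} (hab : a < b)
    (hb : b ≤ (edges X idx).length) : Sep X idx a b := by
  cases idx with
  | H j =>
    obtain h | h | h : (a ≤ 2 ∧ 2 < b) ∨ b ≤ 2 ∨ 3 ≤ a := by omega
    · exact sep_of_unique 2 h.1 h.2 (.v j) rfl (by simp [edges])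
    · exact sep_of_nodup hab hb 0 2 (Nat.zero_le _) h (by simp [edges])
    · exact sep_of_nodup hab hb 3 5 h hb (by simp [edges])
  | F0 =>
    obtain h | h | h | h | h : (a ≤ 2 ∧ 2 < b) ∨ (a ≤ 5 ∧ 5 < b) ∨ b ≤ 2 ∨
      (3 ≤ a ∧ b ≤ 5) ∨ 6 ≤ a := by omega
    · exact sep_of_unique 2 h.1 h.2 (.q 0) rfl (by simp [edges])
    · exact sep_of_unique 5 h.1 h.2 (.q 1) rfl (by simp [edges])
    · exact sep_of_nodup hab hb 0 2 (Nat.zero_le _) h (by simp [edges])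
    · exact sep_of_nodup hab hb 3 5 h.1 h.2 (by simp [edges])
    · exact sep_of_nodup hab hb 6 8 h hb (by simp [edges])
  | F1 =>
    obtain h | h | h : (a ≤ 1 ∧ 1 < b) ∨ b ≤ 1 ∨ 2 ≤ a := by omega
    · exact sep_of_unique 1 h.1 h.2 (.q 2) rfl (by simp [edges])
    · exact sep_of_nodup hab hb 0 1 (Nat.zero_le _) h (by simp [edges])
    · exact sep_of_nodup hab hb 2 5 h hb (by simp [edges])
  | F2 =>
    obtain h | h | h | h | h : (a ≤ 2 ∧ 2 < b) ∨ (a ≤ 4 ∧ 4 < b) ∨ b ≤ 2 ∨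
      (3 ≤ a ∧ b ≤ 4) ∨ 5 ≤ a := by omega
    · exact sep_of_unique 2 h.1 h.2 (.q 0) rfl (by simp [edges])
    · exact sep_of_unique 4 h.1 h.2 (.q 1) rfl (by simp [edges])
    · exact sep_of_nodup hab hb 0 2 (Nat.zero_le _) h (by simp [edges])
    · exact sep_of_nodup hab hb 3 4 h.1 h.2 (by simp [edges])
    · exact sep_of_nodup hab hb 5 9 h hb (by simp [edges])
  | G j =>
    obtain h | h | h : (a ≤ 2 ∧ 2 < b) ∨ b ≤ 2 ∨ 3 ≤ a := by omega
    · refine sep_cut_fwd 2 h.1 h.2 .z rfl fun r d hr => ?_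
      by_contra! hlt
      interval_cases r <;> simp [edges] at hr
    · exact sep_of_nodup hab hb 0 2 (Nat.zero_le _) h (by simp [edges])
    · exact sep_of_nodup hab hb 3 8 h hb (by simp [edges])
  | D l =>
    obtain h | h | h : (a ≤ 2 ∧ 2 < b) ∨ b ≤ 2 ∨ 3 ≤ a := by omega
    · refine sep_cut_fwd 2 h.1 h.2 .z rfl fun r d hr => ?_
      by_contra! hlt
      interval_cases r <;> simp [edges] at hr
    · exact sep_of_nodup hab hb 0 2 (Nat.zero_le _) h (by simp [edges])
    · exact sep_of_nodup hab hb 3 8 h hb (by simp [edges])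
  | T0 i =>
    -- The cut edges 4, 8, 12 are the last edges labelled by the respective variable,
    -- since the three variables of a clause are distinct.
    obtain h | h | h | h | h | h | h : (a ≤ 4 ∧ 4 < b) ∨ (a ≤ 8 ∧ 8 < b) ∨
      (a ≤ 12 ∧ 12 < b) ∨ b ≤ 4 ∨ (5 ≤ a ∧ b ≤ 8) ∨ (9 ≤ a ∧ b ≤ 12) ∨ 13 ≤ a := by omega
    · refine sep_cut_bwd 4 h.1 h.2 (.x (X i 0)) rfl fun r d hr => ?_
      have hr17 : r < 17 := (List.getElem?_eq_some_iff.mp hr).1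
      by_contra! hlt
      interval_cases r <;> simp [edges, (hX i).eq_iff] at hr
    · refine sep_cut_bwd 8 h.1 h.2 (.x (X i 1)) rfl fun r d hr => ?_
      have hr17 : r < 17 := (List.getElem?_eq_some_iff.mp hr).1
      by_contra! hlt
      interval_cases r <;> simp [edges, (hX i).eq_iff] at hr
    · refine sep_cut_bwd 12 h.1 h.2 (.x (X i 2)) rfl fun r d hr => ?_
      have hr17 : r < 17 := (List.getElem?_eq_some_iff.mp hr).1
      by_contra! hlt
      interval_cases r <;> simp [edges] at hr
    · exact sep_of_nodup hab hb 0 4 (Nat.zero_le _) h (by simp [edges])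
    · exact sep_of_nodup hab hb 5 8 h.1 h.2 (by simp [edges, fmul3_inj])
    · exact sep_of_nodup hab hb 9 12 h.1 h.2 (by simp [edges, fmul3_inj])
    · exact sep_of_nodup hab hb 13 17 h hb (by simp [edges])
  | T1 i => exact sep_of_nodup hab hb 0 4 (Nat.zero_le _) hb (by simp [edges, (hX i).eq_iff])
  | T2 i => exact sep_of_nodup hab hb 0 4 (Nat.zero_le _) hb (by simp [edges, (hX i).eq_iff])
  | T3 i => exact sep_of_nodup hab hb 0 4 (Nat.zero_le _) hb (by simp [edges, (hX i).eq_iff])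

end Helpers

/-- For `τ = {nop, set, swap, free}`: if `U^{σ1}_φ` has the
`τ`-ESSP then it has the `τ`-SSP. -/
theorem sigma1_essp_implies_ssp {V : Type} [Fintype V] [DecidableEq V]
    (m : ℕ) (hm : 0 < m) (X : Fin m → Fin 3 → V) (hφ : Cubic m X)
    (h : UESSP tau1 (gadget m X false)) :
    USSP tau1 (gadget m X false) := by
  intro idx s s' hne
  rcases lt_or_gt_of_ne ((pos_injective idx).ne hne) with hlt | hlt
  · exact (sep_of_lt hφ.1 idx hlt (pos_le X idx s')).exists_region
  · obtain ⟨R, hR⟩ := (sep_of_lt hφ.1 idx hlt (pos_le X idx s)).exists_region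
    exact ⟨R, hR.symm⟩

end PetriNets
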